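/- Let (A,m) be a rank-2 multiarrangement with a heavy hyperplane H_0, i.e., m(H_0) ≥ Σ_{L ≠ H_0} m(L). Then (A,m) is free with exponents (m(H_0), |m| − m(H_0)). -/

import Mathlib

open scoped Classical
open MvPolynomial

namespace ArrPaper

variable {K : Type*} [Field K] {ℓ : ℕ}

/-- The coordinate ring `S = K[x₁,…,x_ℓ]`. -/
noncomputable abbrev S (K : Type*) [Field K] (ℓ : ℕ) := MvPolynomial (Fin ℓ) K

/-- The linear form associated to a covector `c`. -/
noncomputable def linForm (c : Fin ℓ → K) : S K ℓ :=
  ∑ i, MvPolynomial.C (c i) * MvPolynomial.X i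

/-- The linear functional associated to a covector. -/
noncomputable def toFunc (c : Fin ℓ → K) : (Fin ℓ → K) →ₗ[K] K :=
  ∑ i, c i • LinearMap.proj i

/-- A (central) hyperplane arrangement, given by a finite set of nonzero,
pairwise non-proportional covectors (defining linear forms). -/
structure Arrangement (K : Type*) [Field K] (ℓ : ℕ) where
  hyps : Finset (Fin ℓ → K)
  ne_zero : ∀ c ∈ hyps, c ≠ 0
  nonparallel : ∀ c ∈ hyps, ∀ c' ∈ hyps, c ≠ c' → ∀ t : K, c' ≠ t • c

/-- Derivations of the polynomial ring `S`. -/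
abbrev Der (K : Type*) [Field K] (ℓ : ℕ) := Derivation K (S K ℓ) (S K ℓ)

/-- `θ` is a logarithmic derivation of the multiarrangement `(A, m)`, i.e.
`θ(α_H) ∈ α_H^{m(H)}·S` for all `H ∈ A`. -/
def IsLogDer (A : Arrangement K ℓ) (m : (Fin ℓ → K) → ℕ) (θ : Der K ℓ) : Prop :=
  ∀ c ∈ A.hyps, (linForm c) ^ (m c) ∣ θ (linForm c)

/-- `θ` is homogeneous of polynomial degree `d`: `θ(α)` is homogeneous of degree `d`
for every linear form `α`. -/
def IsHomogOfDeg (θ : Der K ℓ) (d : ℕ) : Prop :=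
  ∀ c : Fin ℓ → K, (θ (linForm c)).IsHomogeneous d

/-- `θ₁, …, θ_ℓ` form a basis of the `S`-module `D(A,m)`. -/
def IsDerBasis (A : Arrangement K ℓ) (m : (Fin ℓ → K) → ℕ) (θ : Fin ℓ → Der K ℓ) : Prop :=
  (∀ i, IsLogDer A m (θ i)) ∧
  ∀ η : Der K ℓ, IsLogDer A m η → ∃! f : Fin ℓ → S K ℓ, η = ∑ i, f i • θ i

/-- `(A,m)` is free with a homogeneous basis of degrees (exponents) `d`. -/
def IsFreeWithExp (A : Arrangement K ℓ) (m : (Fin ℓ → K) → ℕ) (d : Fin ℓ → ℕ) : Prop :=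
  ∃ θ : Fin ℓ → Der K ℓ, (∀ i, IsHomogOfDeg (θ i) (d i)) ∧ IsDerBasis A m θ

/-- `(A,m)` is a free multiarrangement. -/
def IsFree (A : Arrangement K ℓ) (m : (Fin ℓ → K) → ℕ) : Prop :=
  ∃ d : Fin ℓ → ℕ, IsFreeWithExp A m d

/-- `|m|`, the total multiplicity. -/
def msum (A : Arrangement K ℓ) (m : (Fin ℓ → K) → ℕ) : ℕ := ∑ c ∈ A.hyps, m c

/-- The rank of an arrangement: the dimension of the span of its covectors. -/
noncomputable def rank (A : Arrangement K ℓ) : ℕ :=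
  Module.finrank K (Submodule.span K (A.hyps : Set (Fin ℓ → K)))

/-- `A` is reducible: after a linear change of coordinates it is a product of two
arrangements in complementary (nonzero) subspaces.  In terms of covectors: the
covectors split between two complementary nonzero subspaces of the dual space. -/
def Reducible (A : Arrangement K ℓ) : Prop :=
  ∃ W₁ W₂ : Submodule K (Fin ℓ → K), W₁ ≠ ⊥ ∧ W₂ ≠ ⊥ ∧ W₁ ⊓ W₂ = ⊥ ∧ W₁ ⊔ W₂ = ⊤ ∧
    ∀ c ∈ A.hyps, c ∈ W₁ ∨ c ∈ W₂

/-- The hyperplanes of the localization at a flat; the flat of codimension `r` is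
encoded by the `r`-dimensional subspace `U` of the dual space spanned by the
covectors of the hyperplanes containing it. -/
noncomputable def locHyps (A : Arrangement K ℓ) (U : Submodule K (Fin ℓ → K)) :
    Finset (Fin ℓ → K) :=
  A.hyps.filter (· ∈ U)

/-- `U` encodes a flat of `A` of codimension `r` (an element of `L_r(A)`). -/
def IsFlatOfRank (A : Arrangement K ℓ) (U : Submodule K (Fin ℓ → K)) (r : ℕ) : Prop :=
  Module.finrank K U = r ∧ Submodule.span K (locHyps A U : Set (Fin ℓ → K)) = U

/-- The localization `A_X` of `A` at the flat encoded by `U`. -/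
noncomputable def localize (A : Arrangement K ℓ) (U : Submodule K (Fin ℓ → K)) :
    Arrangement K ℓ where
  hyps := locHyps A U
  ne_zero := fun c hc => A.ne_zero c (Finset.mem_filter.mp hc).1
  nonparallel := fun c hc c' hc' =>
    A.nonparallel c (Finset.mem_filter.mp hc).1 c' (Finset.mem_filter.mp hc').1

/-- `H₀` (given by covector `c₀`) is a heavy hyperplane of `(A,m)`. -/
def IsHeavy (A : Arrangement K ℓ) (m : (Fin ℓ → K) → ℕ) (c₀ : Fin ℓ → K) : Prop :=
  c₀ ∈ A.hyps ∧ (∑ c ∈ A.hyps.erase c₀, m c) ≤ m c₀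

/-- `H₀` (given by covector `c₀`) is a locally heavy hyperplane of `(A,m)`. -/
def IsLocallyHeavy (A : Arrangement K ℓ) (m : (Fin ℓ → K) → ℕ) (c₀ : Fin ℓ → K) : Prop :=
  c₀ ∈ A.hyps ∧ ∀ U : Submodule K (Fin ℓ → K), IsFlatOfRank A U 2 → c₀ ∈ U →
    3 ≤ (locHyps A U).card → (∑ c ∈ (locHyps A U).erase c₀, m c) ≤ m c₀

/-- `b` is the second Betti number of the rank-2 localization of `(A,m)` at `U`:
the product of the nonzero exponents of this free rank-2 multiarrangement. -/
def IsLocalB2 (A : Arrangement K ℓ) (m : (Fin ℓ → K) → ℕ)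
    (U : Submodule K (Fin ℓ → K)) (b : ℕ) : Prop :=
  ∃ d : Fin ℓ → ℕ, IsFreeWithExp (localize A U) m d ∧
    b = ∏ i ∈ Finset.univ.filter (fun i => d i ≠ 0), d i

/-- `b` is the second Betti number `b₂(A,m)` of the multiarrangement `(A,m)`. -/
def IsB2 (A : Arrangement K ℓ) (m : (Fin ℓ → K) → ℕ) (b : ℕ) : Prop :=
  ∃ bloc : Submodule K (Fin ℓ → K) → ℕ,
    (∀ U, IsFlatOfRank A U 2 → IsLocalB2 A m U (bloc U)) ∧
    b = ∑ᶠ U ∈ {U : Submodule K (Fin ℓ → K) | IsFlatOfRank A U 2}, bloc U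

/-- The second Betti number of a simple arrangement:
`b₂(A) = Σ_{X ∈ L₂(A)} (|A_X| - 1)`. -/
noncomputable def b2Simple (A : Arrangement K ℓ) : ℕ :=
  ∑ᶠ U ∈ {U : Submodule K (Fin ℓ → K) | IsFlatOfRank A U 2}, ((locHyps A U).card - 1)

/-- The Euler–Ziegler multiplicity of the restricted hyperplane `H₀ ∩ ker(c)` of
`A^{H₀}`: `m^{H₀}(X) = |m_X| - m(H₀)`. -/
noncomputable def EZmult (A : Arrangement K ℓ) (m : (Fin ℓ → K) → ℕ)
    (c₀ c : Fin ℓ → K) : ℕ :=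
  (∑ c' ∈ A.hyps.filter (· ∈ Submodule.span K ({c₀, c} : Set (Fin ℓ → K))), m c') - m c₀

/-- Two covectors are parallel (define the same hyperplane). -/
def Parallel {n : ℕ} (b b' : Fin n → K) : Prop := ∃ t : K, t ≠ 0 ∧ b' = t • b

/-- The covector on `K^n` obtained by restricting the covector `c` on `K^{n+1}` to the
hyperplane `ker c₀`, transported by the linear isomorphism `e : ker c₀ ≃ K^n`. -/
noncomputable def resCov {n : ℕ} (c₀ : Fin (n+1) → K)
    (e : ↥(LinearMap.ker (toFunc c₀)) ≃ₗ[K] (Fin n → K)) (c : Fin (n+1) → K) :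
    Fin n → K :=
  fun j => toFunc c ((e.symm (Pi.single j 1) : ↥(LinearMap.ker (toFunc c₀))) : Fin (n+1) → K)

/-- `(B, mB)` is (a model, in coordinates, of) the Euler–Ziegler restriction
`(A^{H₀}, m^{H₀})` of `(A,m)` to the hyperplane `H₀ = ker c₀ ∈ A`. -/
def IsEZRes {n : ℕ} (A : Arrangement K (n+1)) (m : (Fin (n+1) → K) → ℕ)
    (c₀ : Fin (n+1) → K) (B : Arrangement K n) (mB : (Fin n → K) → ℕ) : Prop :=
  c₀ ∈ A.hyps ∧
  ∃ e : ↥(LinearMap.ker (toFunc c₀)) ≃ₗ[K] (Fin n → K),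
    (∀ c ∈ A.hyps.erase c₀, ∃ b ∈ B.hyps,
        Parallel b (resCov c₀ e c) ∧ mB b = EZmult A m c₀ c) ∧
    (∀ b ∈ B.hyps, ∃ c ∈ A.hyps.erase c₀, Parallel b (resCov c₀ e c))

/-- A combinatorial equivalence between two arrangements: a bijection between the
hyperplanes inducing an isomorphism of intersection lattices (it preserves the rank
of every subset of hyperplanes). -/
def CombEquiv (A A' : Arrangement K ℓ) : Prop :=
  ∃ φ : (Fin ℓ → K) → (Fin ℓ → K), Set.BijOn φ ↑A.hyps ↑A'.hyps ∧
    ∀ T : Finset (Fin ℓ → K), T ⊆ A.hyps →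
      Module.finrank K (Submodule.span K (T : Set (Fin ℓ → K))) =
      Module.finrank K (Submodule.span K ((T.image φ) : Set (Fin ℓ → K)))

/-!
Choose coordinates `x, y, z₁, …` with `H₀ = ker x`, such that every other hyperplane is the kernel
of some `y - r x`. Off `x = 0` the slopes `r` are pairwise distinct points of an affine line, and
Hermite interpolation at these points, followed by homogenization, gives a form `G` of degree
`m(H₀)` congruent to `r x ^ m(H₀)` modulo `(y - r x) ^ m(H)` for every `H = ker (y - r x)`.
Heaviness is exactly the room that the degree of the interpolant needs. So
`x ^ m(H₀) ∂x + G ∂y` is logarithmic, and subtracting a multiple of it from a logarithmic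
derivation kills the `∂x` component and leaves a `∂y` component divisible by
`P = ∏_{H ≠ H₀} α_H ^ m(H)`. Hence it forms a basis together with `P ∂y, ∂z₁, …`.
-/

lemma exists_basis_extending {ι κ V : Type*} [AddCommGroup V] [Module K V]
    (b : Module.Basis κ K V) {v : ι → V} (hv : LinearIndependent K v) :
    ∃ (e : Module.Basis κ K V) (σ : ι ↪ κ), ∀ i, e (σ i) = v i := by
  have hs := hv.linearIndepOn_id
  let e := Module.Basis.extend hs
  let τ := e.indexEquiv b
  let inc : ι ↪ hs.extend (Set.subset_univ _) :=
    ⟨fun i => ⟨v i, hs.subset_extend _ (Set.mem_range_self i)⟩,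
      fun i j hij => hv.injective (congrArg Subtype.val hij)⟩
  refine ⟨e.reindex τ, inc.trans τ.toEmbedding, fun i => ?_⟩
  calc e.reindex τ (τ (inc i)) = e (inc i) := by simp
    _ = v i := Module.Basis.extend_apply_self hs (inc i)

lemma map_univ_update_update {ι α : Type*} [Fintype ι] [DecidableEq ι] {i₀ i₁ : ι} (hne : i₀ ≠ i₁)
    (a₀ a₁ b : α) :
    Finset.univ.val.map (Function.update (Function.update (fun _ => b) i₁ a₁) i₀ a₀) =
      a₀ ::ₘ a₁ ::ₘ Multiset.replicate (Fintype.card ι - 2) b := by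
  have h₁ : i₁ ∈ (Finset.univ : Finset ι).erase i₀ := by simp [hne.symm]
  rw [← Finset.insert_erase (Finset.mem_univ i₀), ← Finset.insert_erase h₁,
    Finset.insert_val_of_notMem (by simp [hne]), Finset.insert_val_of_notMem (by simp),
    Multiset.map_cons, Multiset.map_cons, Function.update_self, Function.update_of_ne hne.symm,
    Function.update_self]
  refine congrArg (a₀ ::ₘ a₁ ::ₘ ·) (Multiset.eq_replicate.mpr ⟨?_, fun x hx => ?_⟩)
  · rw [Multiset.card_map, Finset.card_val, Finset.card_erase_of_mem h₁,
      Finset.card_erase_of_mem (Finset.mem_univ _), Finset.card_univ, Nat.sub_sub]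
  · obtain ⟨i, hi, rfl⟩ := Multiset.mem_map.mp hx
    have hi : i ≠ i₁ ∧ i ≠ i₀ := by simpa [-Finset.erase_val] using hi
    rw [Function.update_of_ne hi.2, Function.update_of_ne hi.1]

section LinForm

lemma linForm_eq_linearCombination :
    (linForm : (Fin ℓ → K) → S K ℓ) = Fintype.linearCombination K X := by
  ext1 c
  simp [linForm, Fintype.linearCombination_apply, MvPolynomial.smul_eq_C_mul]

lemma linForm_sub (c c' : Fin ℓ → K) : linForm (c - c') = linForm c - linForm c' := by
  simp only [linForm_eq_linearCombination, map_sub]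

lemma linForm_smul (t : K) (c : Fin ℓ → K) : linForm (t • c) = C t * linForm c := by
  simp only [linForm_eq_linearCombination, map_smul, MvPolynomial.smul_eq_C_mul]

lemma linForm_single (j : Fin ℓ) : linForm (Pi.single j (1 : K)) = X j := by
  simp [linForm_eq_linearCombination]

lemma linForm_injective : Function.Injective (linForm : (Fin ℓ → K) → S K ℓ) := by
  intro c c' h
  funext i
  simpa [linForm, Pi.single_apply] using congrArg (eval (Pi.single i (1 : K))) h

lemma isHomogeneous_linForm (c : Fin ℓ → K) : (linForm c).IsHomogeneous 1 :=
  IsHomogeneous.sum _ _ _ fun i _ => by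
    simpa using (isHomogeneous_C (Fin ℓ) (c i)).mul (isHomogeneous_X K i)

lemma isHomogeneous_linForm_pow (c : Fin ℓ → K) (n : ℕ) :
    (linForm c ^ n).IsHomogeneous n := by
  simpa only [one_mul] using (isHomogeneous_linForm c).pow n

lemma irreducible_linForm {c : Fin ℓ → K} (hc : c ≠ 0) : Irreducible (linForm c) := by
  obtain ⟨i, hi⟩ := Function.ne_iff.mp hc
  have h : linForm c = sumSMulX (Finsupp.equivFunOnFinite.symm c) := by
    simp [linForm, sumSMulX, Finsupp.linearCombination_apply, Finsupp.sum_fintype,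
      MvPolynomial.smul_eq_C_mul]
  rw [h]
  exact irreducible_sumSMulX _ ⟨i, by simpa using hi⟩
    fun t ht => isUnit_iff_ne_zero.mpr (ne_zero_of_dvd_ne_zero hi (ht i))

lemma isRelPrime_linForm {c c' : Fin ℓ → K} (hc : c ≠ 0) (h : ∀ t : K, c' ≠ t • c) :
    IsRelPrime (linForm c) (linForm c') := by
  have hc' : c' ≠ 0 := by simpa using h 0
  rw [(irreducible_linForm hc).isRelPrime_iff_not_dvd]
  intro hdvd
  obtain ⟨u, hu⟩ := (irreducible_linForm hc).associated_of_dvd (irreducible_linForm hc') hdvd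
  obtain ⟨t, -, ht⟩ := isUnit_iff_eq_C_of_isReduced.mp u.isUnit
  refine h t (linForm_injective ?_)
  rw [linForm_smul, ← hu, ht, mul_comm]

end LinForm

section Derivation

lemma derivation_ext_of_basis {ι : Type*} (e : Module.Basis ι K (Fin ℓ → K)) {θ η : Der K ℓ}
    (h : ∀ i, θ (linForm (e i)) = η (linForm (e i))) : θ = η := by
  have hcomp : (θ : S K ℓ →ₗ[K] S K ℓ) ∘ₗ Fintype.linearCombination K X =
      (η : S K ℓ →ₗ[K] S K ℓ) ∘ₗ Fintype.linearCombination K X :=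
    e.ext fun i => by simpa [linForm_eq_linearCombination] using h i
  refine MvPolynomial.derivation_ext fun j => ?_
  rw [← linForm_single, linForm_eq_linearCombination]
  exact LinearMap.congr_fun hcomp _

lemma sum_smul_derivation_apply {ι : Type*} [Fintype ι] (f : ι → S K ℓ) (θ : ι → Der K ℓ)
    (p : S K ℓ) : (∑ i, f i • θ i) p = ∑ i, f i * θ i p := by
  rw [← Derivation.coeFnAddMonoidHom_apply, map_sum, Finset.sum_apply]
  rfl

lemma IsHomogOfDeg.add {θ η : Der K ℓ} {n : ℕ} (hθ : IsHomogOfDeg θ n) (hη : IsHomogOfDeg η n) :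
    IsHomogOfDeg (θ + η) n := fun c => (hθ c).add (hη c)

/-- The derivation with constant coefficients that takes the value `φ c` on the linear form of
each covector `c`, that is, the directional derivative along the vector `φ` of the bidual. -/
noncomputable def dirDeriv (φ : Module.Dual K (Fin ℓ → K)) : Der K ℓ :=
  mkDerivation K fun j => C (φ (Pi.single j 1))

lemma dirDeriv_linForm (φ : Module.Dual K (Fin ℓ → K)) (c : Fin ℓ → K) :
    dirDeriv φ (linForm c) = C (φ c) := by
  have hφ : φ c = ∑ j, c j * φ (Pi.single j 1) := by
    conv_lhs => rw [pi_eq_sum_univ' c]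
    simp only [map_sum, map_smul, smul_eq_mul]
  rw [hφ, linForm_eq_linearCombination, Fintype.linearCombination_apply]
  simp only [dirDeriv, map_sum, map_mul, Derivation.map_smul, mkDerivation_X]
  simp only [MvPolynomial.smul_eq_C_mul]

lemma isHomogOfDeg_smul_dirDeriv {f : S K ℓ} {n : ℕ} (hf : f.IsHomogeneous n)
    (φ : Module.Dual K (Fin ℓ → K)) : IsHomogOfDeg (f • dirDeriv φ) n := fun c => by
  simpa [dirDeriv_linForm] using hf.mul (isHomogeneous_C (Fin ℓ) (φ c))

lemma isDerBasis_of_linearIndependent {A : Arrangement K ℓ} {m : (Fin ℓ → K) → ℕ}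
    {θ : Fin ℓ → Der K ℓ} (hli : LinearIndependent (S K ℓ) θ)
    (hspan : ∀ η, IsLogDer A m η ↔ ∃ f : Fin ℓ → S K ℓ, ∑ i, f i • θ i = η) :
    IsDerBasis A m θ := by
  refine ⟨fun i => (hspan _).mpr ⟨Pi.single i 1, by simp [Pi.single_apply]⟩, fun η hη => ?_⟩
  obtain ⟨f, hf⟩ := (hspan η).mp hη
  exact ⟨f, hf.symm, fun g hg =>
    linearIndependent_iff_injective_fintypeLinearCombination.mp hli (by
      simpa only [Fintype.linearCombination_apply] using hg.symm.trans hf.symm)⟩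

end Derivation

section Interpolation

open scoped Polynomial

variable {ι : Type*} {s : Finset ι} {r : ι → K}

lemma exists_hermite_interpolant (hr : Set.InjOn r s) (m : ι → ℕ) (v : ι → K[X]) :
    ∃ g : K[X], g.degree < (∑ i ∈ s, m i : ℕ) ∧
      ∀ i ∈ s, (Polynomial.X - Polynomial.C (r i)) ^ m i ∣ g - v i := by
  let p : ι → K[X] := fun i => (Polynomial.X - Polynomial.C (r i)) ^ m i
  have hcoprime : Pairwise fun i j : s => IsCoprime (p i) (p j) := fun _ _ hij =>
    (Polynomial.pairwise_coprime_X_sub_C hr.injective hij).pow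
  obtain ⟨g, hg⟩ := Ideal.exists_forall_sub_mem_ideal (I := fun i : s => Ideal.span {p i})
    (fun i j hij => (Ideal.isCoprime_span_singleton_iff _ _).mpr (hcoprime hij)) fun i => v i
  have hmonic : ∀ i ∈ s, (p i).Monic := fun i _ => (Polynomial.monic_X_sub_C _).pow _
  have hQ : (∏ i ∈ s, p i).Monic := Polynomial.monic_prod_of_monic _ _ hmonic
  have hQdeg : (∏ i ∈ s, p i).degree = (∑ i ∈ s, m i : ℕ) := by
    rw [Polynomial.degree_eq_natDegree hQ.ne_zero, Polynomial.natDegree_prod_of_monic _ _ hmonic]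
    simp [p]
  refine ⟨g %ₘ ∏ i ∈ s, p i, hQdeg ▸ Polynomial.degree_modByMonic_lt g hQ, fun i hi => ?_⟩
  rw [← sub_add_sub_cancel (g %ₘ _) g (v i)]
  exact dvd_add ((Finset.dvd_prod_of_mem p hi).trans (Polynomial.dvd_modByMonic_sub g _))
    (Ideal.mem_span_singleton.mp (hg ⟨i, hi⟩))

lemma homogenize_natDegree_dvd_homogenize {R : Type*} [CommSemiring R] {f : R[X]} {N : ℕ}
    (hf : f.natDegree ≤ N) : f.homogenize f.natDegree ∣ f.homogenize N := by
  have h := Polynomial.homogenize_mul f 1 le_rfl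
    (Polynomial.natDegree_one.trans_le (N - f.natDegree).zero_le)
  rw [mul_one, Nat.add_sub_cancel' hf] at h
  exact Dvd.intro _ h.symm

lemma homogenize_X_sub_C_pow {R : Type*} [CommRing R] (a : R) (n : ℕ) :
    ((Polynomial.X - Polynomial.C a) ^ n).homogenize n = (X 0 - C a * X 1) ^ n := by
  have h := Polynomial.homogenize_finsetProd (s := Finset.range n)
    (p := fun _ => Polynomial.X - Polynomial.C a) (n := fun _ => 1)
    fun _ _ => Polynomial.natDegree_X_sub_C_le a
  simpa using h

lemma exists_homogeneous_hermite_interpolant (hr : Set.InjOn r s) {m : ι → ℕ} {N : ℕ}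
    (hN : ∑ i ∈ s, m i ≤ N) (a : ι → K) :
    ∃ G : MvPolynomial (Fin 2) K, G.IsHomogeneous N ∧
      ∀ i ∈ s, (X 0 - C (r i) * X 1) ^ m i ∣ G - C (a i) * X 1 ^ N := by
  obtain ⟨g, hg, hdvd⟩ := exists_hermite_interpolant hr m fun i => Polynomial.C (a i)
  have hgN : g.natDegree ≤ N :=
    Polynomial.natDegree_le_of_degree_le (hg.le.trans (Nat.cast_le.mpr hN))
  refine ⟨g.homogenize N, Polynomial.isHomogeneous_homogenize g, fun i hi => ?_⟩
  have hdeg : (g - Polynomial.C (a i)).natDegree ≤ N := by simpa using hgN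
  have h := (Polynomial.homogenize_dvd (hdvd i hi)).trans
    (homogenize_natDegree_dvd_homogenize hdeg)
  rwa [Polynomial.natDegree_pow, Polynomial.natDegree_X_sub_C, mul_one, homogenize_X_sub_C_pow,
    Polynomial.homogenize_sub, Polynomial.homogenize_C] at h

end Interpolation

section Pencil

/-- The covectors `c₀, c₁` and the slopes `r` present `A` as a pencil: every hyperplane of `A` other
than `ker c₀` is the kernel of `c₁ - r c • c₀`. The values of `r` elsewhere are irrelevant. -/
def IsPencil (A : Arrangement K ℓ) (c₀ c₁ : Fin ℓ → K) (r : (Fin ℓ → K) → K) : Prop :=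
  ∀ c ∈ A.hyps.erase c₀, Parallel (c₁ - r c • c₀) c

/-- The defining polynomial of the multiarrangement obtained from `(A, m)` by deleting the
hyperplane `ker c₀`. It generates the `∂y` components of the logarithmic derivations that
annihilate `linForm c₀`. -/
noncomputable def deletionPoly (A : Arrangement K ℓ) (m : (Fin ℓ → K) → ℕ) (c₀ : Fin ℓ → K) :
    S K ℓ :=
  ∏ c ∈ A.hyps.erase c₀, linForm c ^ m c

variable {A : Arrangement K ℓ} {m : (Fin ℓ → K) → ℕ} {c₀ c₁ : Fin ℓ → K} {r : (Fin ℓ → K) → K}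

lemma isHomogeneous_deletionPoly :
    (deletionPoly A m c₀).IsHomogeneous (∑ c ∈ A.hyps.erase c₀, m c) :=
  IsHomogeneous.prod _ _ _ fun c _ => isHomogeneous_linForm_pow c (m c)

lemma deletionPoly_ne_zero : deletionPoly A m c₀ ≠ 0 :=
  Finset.prod_ne_zero_iff.mpr fun c hc =>
    pow_ne_zero _ (irreducible_linForm (A.ne_zero c (Finset.mem_of_mem_erase hc))).ne_zero

lemma deletionPoly_dvd_iff {f : S K ℓ} :
    deletionPoly A m c₀ ∣ f ↔ ∀ c ∈ A.hyps.erase c₀, linForm c ^ m c ∣ f := by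
  refine ⟨fun h c hc => (Finset.dvd_prod_of_mem (fun c => linForm c ^ m c) hc).trans h, fun h => ?_⟩
  refine Finset.prod_dvd_of_isRelPrime (fun c hc c' hc' hne => IsRelPrime.pow ?_) h
  have hc := Finset.mem_of_mem_erase hc
  exact isRelPrime_linForm (A.ne_zero c hc)
    (A.nonparallel c hc c' (Finset.mem_of_mem_erase hc') hne)

lemma exists_linearIndependent_isPencil (hA : rank A = 2) (h₀ : c₀ ∈ A.hyps) :
    ∃ c₁ r, LinearIndependent K ![c₀, c₁] ∧ IsPencil A c₀ c₁ r := by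
  let W := Submodule.span K (A.hyps : Set (Fin ℓ → K))
  let w₀ : W := ⟨c₀, Submodule.subset_span h₀⟩
  have hw₀ : w₀ ≠ 0 := fun h => A.ne_zero c₀ h₀ (congrArg Subtype.val h)
  have hW : Module.finrank K W = 2 := hA
  obtain ⟨w₁, hli⟩ := exists_linearIndependent_pair_of_one_lt_finrank (hW ▸ one_lt_two) hw₀
  have hspan := hli.span_eq_top_of_card_eq_finrank (by simp [hW])
  have hslope : ∀ c ∈ A.hyps.erase c₀, ∃ t : K, Parallel ((w₁ : Fin ℓ → K) - t • c₀) c := by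
    intro c hc
    obtain ⟨hne, hcA⟩ := Finset.mem_erase.mp hc
    have hmem : (⟨c, Submodule.subset_span hcA⟩ : W) ∈ Submodule.span K {w₀, w₁} := by
      simpa [Set.pair_comm] using hspan.ge (Submodule.mem_top (x := ⟨c, Submodule.subset_span hcA⟩))
    obtain ⟨a, b, hab⟩ := Submodule.mem_span_pair.mp hmem
    have hab : a • c₀ + b • (w₁ : Fin ℓ → K) = c := congrArg Subtype.val hab
    have hb : b ≠ 0 := by
      rintro rfl
      exact A.nonparallel c₀ h₀ c hcA hne.symm a (by simpa using hab.symm)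
    refine ⟨-(b⁻¹ * a), b, hb, ?_⟩
    rw [← hab, neg_smul, sub_neg_eq_add, smul_add, smul_smul, mul_inv_cancel_left₀ hb, add_comm]
  choose! r hr using hslope
  refine ⟨w₁, r, ?_, hr⟩
  have h := hli.map' W.subtype W.ker_subtype
  rwa [← FinVec.map_eq] at h

namespace IsPencil

lemma injOn (h : IsPencil A c₀ c₁ r) : Set.InjOn r (A.hyps.erase c₀) := by
  intro c hc c' hc' hrr
  by_contra hne
  obtain ⟨b, hb, hcb⟩ := h c hc
  obtain ⟨b', -, hcb'⟩ := h c' hc'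
  refine A.nonparallel c (Finset.mem_of_mem_erase hc) c' (Finset.mem_of_mem_erase hc') hne
    (b' * b⁻¹) ?_
  rw [hcb', ← hrr, mul_smul]
  conv_rhs => rw [hcb, inv_smul_smul₀ hb]

lemma linForm_associated (h : IsPencil A c₀ c₁ r) {c : Fin ℓ → K} (hc : c ∈ A.hyps.erase c₀) :
    Associated (linForm c₁ - C (r c) * linForm c₀) (linForm c) := by
  obtain ⟨b, hb, hcb⟩ := h c hc
  have hunit : IsUnit (C b : S K ℓ) := (isUnit_iff_ne_zero.mpr hb).map C
  conv_rhs => rw [hcb, linForm_smul, linForm_sub, linForm_smul]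
  exact (associated_unit_mul_left _ _ hunit).symm

lemma derivation_linForm_associated (h : IsPencil A c₀ c₁ r) {c : Fin ℓ → K}
    (hc : c ∈ A.hyps.erase c₀) (η : Der K ℓ) :
    Associated (η (linForm c₁) - C (r c) * η (linForm c₀)) (η (linForm c)) := by
  obtain ⟨b, hb, hcb⟩ := h c hc
  have hunit : IsUnit (C b : S K ℓ) := (isUnit_iff_ne_zero.mpr hb).map C
  have hη : η (linForm c) = C b * (η (linForm c₁) - C (r c) * η (linForm c₀)) := by
    conv_lhs => rw [hcb]
    simp only [linForm_smul, linForm_sub, ← MvPolynomial.smul_eq_C_mul, Derivation.map_smul,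
      map_sub]
  rw [hη]
  exact (associated_unit_mul_left _ _ hunit).symm

lemma exists_isHomogeneous_pow_dvd (h : IsPencil A c₀ c₁ r) {N : ℕ}
    (hN : ∑ c ∈ A.hyps.erase c₀, m c ≤ N) :
    ∃ G : S K ℓ, G.IsHomogeneous N ∧
      ∀ c ∈ A.hyps.erase c₀, linForm c ^ m c ∣ G - C (r c) * linForm c₀ ^ N := by
  obtain ⟨G, hG, hdvd⟩ := exists_homogeneous_hermite_interpolant h.injOn hN r
  let φ : MvPolynomial (Fin 2) K →ₐ[K] S K ℓ := aeval ![linForm c₁, linForm c₀]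
  refine ⟨φ G, ?_, fun c hc => ?_⟩
  · have hlin : ∀ i, (![linForm c₁, linForm c₀] i : S K ℓ).IsHomogeneous 1 :=
      Fin.forall_fin_two.mpr ⟨isHomogeneous_linForm _, isHomogeneous_linForm _⟩
    simpa only [one_mul] using hG.aeval _ hlin
  · rw [← ((h.linForm_associated hc).pow_pow (n := m c)).dvd_iff_dvd_left]
    simpa [φ] using map_dvd φ (hdvd c hc)

lemma isLogDer_iff (h : IsPencil A c₀ c₁ r) (h₀ : c₀ ∈ A.hyps) {G : S K ℓ}
    (hG : ∀ c ∈ A.hyps.erase c₀, linForm c ^ m c ∣ G - C (r c) * linForm c₀ ^ m c₀)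
    {η : Der K ℓ} :
    IsLogDer A m η ↔ ∃ f₀ f₁ : S K ℓ, η (linForm c₀) = f₀ * linForm c₀ ^ m c₀ ∧
      η (linForm c₁) = f₀ * G + f₁ * deletionPoly A m c₀ := by
  have hdvd : ∀ f₀, η (linForm c₀) = f₀ * linForm c₀ ^ m c₀ → ∀ c ∈ A.hyps.erase c₀,
      (linForm c ^ m c ∣ η (linForm c) ↔ linForm c ^ m c ∣ η (linForm c₁) - f₀ * G) := by
    intro f₀ hf₀ c hc
    rw [← (h.derivation_linForm_associated hc η).dvd_iff_dvd_right, hf₀]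
    refine dvd_iff_dvd_of_dvd_sub ?_
    convert (hG c hc).mul_left f₀ using 1
    ring
  have hsplit : IsLogDer A m η ↔ linForm c₀ ^ m c₀ ∣ η (linForm c₀) ∧
      ∀ c ∈ A.hyps.erase c₀, linForm c ^ m c ∣ η (linForm c) := by
    have hins := Finset.forall_mem_insert c₀ (A.hyps.erase c₀)
      fun c => linForm c ^ m c ∣ η (linForm c)
    rwa [Finset.insert_erase h₀] at hins
  rw [hsplit, dvd_iff_exists_eq_mul_left, ← exists_and_right]
  refine exists_congr fun f₀ => ?_
  rw [exists_and_left]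
  refine and_congr_right fun hf₀ => ?_
  rw [forall₂_congr (hdvd f₀ hf₀), ← deletionPoly_dvd_iff, dvd_iff_exists_eq_mul_left]
  simp only [sub_eq_iff_eq_add']

end IsPencil

end Pencil

section HeavyBasis

variable {A : Arrangement K ℓ} {m : (Fin ℓ → K) → ℕ} {e : Module.Basis (Fin ℓ) K (Fin ℓ → K)}
  {i₀ i₁ : Fin ℓ} {G : S K ℓ}

/-- For a basis `e` of covectors with dual coordinates `x` (at `i₀`), `y` (at `i₁`) and `z_j`, the
derivations `x ^ m(x) ∂x + G ∂y`, `P ∂y` and `∂z_j`, where `P` is the deletion polynomial of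
`ker x`. They form a basis of `D(A, m)` when `G` interpolates the slopes of the other hyperplanes;
the definition makes sense for any `G`. -/
noncomputable def heavyBasis (A : Arrangement K ℓ) (m : (Fin ℓ → K) → ℕ)
    (e : Module.Basis (Fin ℓ) K (Fin ℓ → K)) (i₀ i₁ : Fin ℓ) (G : S K ℓ) : Fin ℓ → Der K ℓ :=
  Function.update
    (Function.update (fun j => dirDeriv (e.coord j)) i₁
      (deletionPoly A m (e i₀) • dirDeriv (e.coord i₁)))
    i₀ (linForm (e i₀) ^ m (e i₀) • dirDeriv (e.coord i₀) + G • dirDeriv (e.coord i₁))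

lemma dirDeriv_coord_linForm (i j : Fin ℓ) :
    dirDeriv (e.coord i) (linForm (e j)) = (Pi.single i 1 : Fin ℓ → S K ℓ) j := by
  simp [dirDeriv_linForm, Finsupp.single_apply, Pi.single_apply, apply_ite C, eq_comm]

lemma sum_smul_heavyBasis_linForm (hne : i₀ ≠ i₁) (f : Fin ℓ → S K ℓ) (j : Fin ℓ) :
    (∑ i, f i • heavyBasis A m e i₀ i₁ G i) (linForm (e j)) =
      Function.update
        (Function.update f i₁ (f i₀ * G + f i₁ * deletionPoly A m (e i₀)))
        i₀ (f i₀ * linForm (e i₀) ^ m (e i₀)) j := by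
  rw [sum_smul_derivation_apply]
  rcases eq_or_ne j i₀ with rfl | hj₀
  · rw [Fintype.sum_eq_single j fun i hi => ?_]
    · simp [heavyBasis, dirDeriv_coord_linForm, hne]
    · rcases eq_or_ne i i₁ with rfl | hi₁ <;> simp [heavyBasis, dirDeriv_coord_linForm, *]
  rcases eq_or_ne j i₁ with rfl | hj₁
  · rw [Fintype.sum_eq_add i₀ j hne fun i hi => ?_]
    · simp [heavyBasis, dirDeriv_coord_linForm, hj₀]
    · simp [heavyBasis, dirDeriv_coord_linForm, hi.1, hi.2, hi.2.symm]
  · rw [Fintype.sum_eq_single j fun i hi => ?_]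
    · simp [heavyBasis, dirDeriv_coord_linForm, hj₀, hj₁]
    · rcases eq_or_ne i i₀ with rfl | hi₀
      · simp [heavyBasis, dirDeriv_coord_linForm, hj₀, hj₁]
      rcases eq_or_ne i i₁ with rfl | hi₁ <;>
        simp [heavyBasis, dirDeriv_coord_linForm, *]

lemma linearIndependent_heavyBasis (hne : i₀ ≠ i₁) :
    LinearIndependent (S K ℓ) (heavyBasis A m e i₀ i₁ G) := by
  refine Fintype.linearIndependent_iff.mpr fun f hf => ?_
  have hcoord := fun j => (sum_smul_heavyBasis_linForm hne f j).symm.trans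
    (congrArg (fun θ : Der K ℓ => θ (linForm (e j))) hf)
  have hx : linForm (e i₀) ≠ 0 := (irreducible_linForm (e.ne_zero i₀)).ne_zero
  have h₀ : f i₀ = 0 := by simpa [hx] using hcoord i₀
  have h₁ : f i₁ = 0 := by
    simpa [hne.symm, h₀, deletionPoly_ne_zero] using hcoord i₁
  intro j
  rcases eq_or_ne j i₀ with rfl | hj₀
  · exact h₀
  rcases eq_or_ne j i₁ with rfl | hj₁
  · exact h₁
  simpa [hj₀, hj₁] using hcoord j

lemma isHomogOfDeg_heavyBasis (hG : G.IsHomogeneous (m (e i₀))) (i : Fin ℓ) :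
    IsHomogOfDeg (heavyBasis A m e i₀ i₁ G i)
      (Function.update (Function.update (fun _ => 0) i₁ (∑ c ∈ A.hyps.erase (e i₀), m c)) i₀
        (m (e i₀)) i) := by
  rcases eq_or_ne i i₀ with rfl | hi₀
  · simpa only [heavyBasis, Function.update_self] using
      (isHomogOfDeg_smul_dirDeriv (isHomogeneous_linForm_pow _ _) _).add
        (isHomogOfDeg_smul_dirDeriv hG _)
  rcases eq_or_ne i i₁ with rfl | hi₁
  · simpa only [heavyBasis, Function.update_of_ne hi₀, Function.update_self] using
      isHomogOfDeg_smul_dirDeriv isHomogeneous_deletionPoly _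
  · simpa [heavyBasis, hi₀, hi₁] using
      isHomogOfDeg_smul_dirDeriv (isHomogeneous_one _ _) (e.coord i)

lemma IsPencil.isDerBasis_heavyBasis {r : (Fin ℓ → K) → K} (h : IsPencil A (e i₀) (e i₁) r)
    (hne : i₀ ≠ i₁) (h₀ : e i₀ ∈ A.hyps)
    (hG : ∀ c ∈ A.hyps.erase (e i₀),
      linForm c ^ m c ∣ G - C (r c) * linForm (e i₀) ^ m (e i₀)) :
    IsDerBasis A m (heavyBasis A m e i₀ i₁ G) := by
  refine isDerBasis_of_linearIndependent (linearIndependent_heavyBasis hne) fun η => ?_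
  rw [h.isLogDer_iff h₀ hG]
  constructor
  · rintro ⟨f₀, f₁, hη₀, hη₁⟩
    refine ⟨Function.update (Function.update (fun j => η (linForm (e j))) i₁ f₁) i₀ f₀,
      derivation_ext_of_basis e fun j => ?_⟩
    rw [sum_smul_heavyBasis_linForm hne]
    rcases eq_or_ne j i₀ with rfl | hj₀
    · simp [hη₀]
    rcases eq_or_ne j i₁ with rfl | hj₁
    · simp [hj₀, hη₁]
    · simp [hj₀, hj₁]
  · rintro ⟨f, rfl⟩
    refine ⟨f i₀, f i₁, ?_, ?_⟩
    · rw [sum_smul_heavyBasis_linForm hne, Function.update_self]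
    · rw [sum_smul_heavyBasis_linForm hne, Function.update_of_ne hne.symm, Function.update_self]

end HeavyBasis

theorem stmt8 (A : Arrangement K ℓ) (m : (Fin ℓ → K) → ℕ)
    (hm : ∀ c ∈ A.hyps, 0 < m c) (hr : rank A = 2)
    (c₀ : Fin ℓ → K) (hH : IsHeavy A m c₀) :
    ∃ d : Fin ℓ → ℕ, IsFreeWithExp A m d ∧
      Finset.univ.val.map d
        = m c₀ ::ₘ (msum A m - m c₀) ::ₘ Multiset.replicate (ℓ - 2) 0 := by
  obtain ⟨h₀, hheavy⟩ := hH
  obtain ⟨c₁, r, hli, hpencil⟩ := exists_linearIndependent_isPencil hr h₀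
  obtain ⟨G, hG, hdvd⟩ := hpencil.exists_isHomogeneous_pow_dvd hheavy
  obtain ⟨e, σ, he⟩ := exists_basis_extending (Pi.basisFun K (Fin ℓ)) hli
  have hne : σ 0 ≠ σ 1 := σ.injective.ne zero_ne_one
  obtain rfl : e (σ 0) = c₀ := he 0
  obtain rfl : e (σ 1) = c₁ := he 1
  refine ⟨_, ⟨heavyBasis A m e (σ 0) (σ 1) G, isHomogOfDeg_heavyBasis hG,
    hpencil.isDerBasis_heavyBasis hne h₀ hdvd⟩, ?_⟩
  rw [map_univ_update_update hne, Fintype.card_fin, msum, ← Finset.add_sum_erase _ _ h₀,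
    Nat.add_sub_cancel_left]

end ArrPaper
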